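/- arXiv:1905.00244 — 6 statements merged into one kernel-verified Lean document; each statement's English description precedes it below -/
import Mathlib

section
/- Let ℓ be a prime with ℓ ≡ 1 (mod 4) and let m, n be integers with m² + n² = ℓ. Then the set of pairs (x, y) ∈ ℤ² with x² + y² = ℓ² and ℓ ∤ x is exactly the eight pairs {(s·(m²−n²), t·2mn) : s, t ∈ {1, −1}} ∪ {(s·2mn, t·(m²−n²)) : s, t ∈ {1, −1}}. -/
/-!
Put `a = m² - n²` and `b = 2mn`, so that `a² + b² = ℓ²`. Then `ℓ` divides neither `a` nor `b`
(otherwise `ℓ` divides both `m` and `n`, hence `ℓ² ∣ ℓ`).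

If `x² + y² = ℓ²` then `(ay - bx)(ay + bx) = ℓ²(a² - x²)`. The prime `ℓ` cannot divide both
factors, as it would divide their sum `2ay`, so `ℓ²` divides one of them. If `ℓ² ∣ ay - bx`,
then `(ax + by)² + (ay - bx)² = ℓ⁴` gives `ax + by = ℓ²j`, `ay - bx = ℓ²k` with `j² + k² = 1`:
in Gaussian terms, `x + iy` is a unit times `a + ib`. The other case is the conjugate one,
obtained from `y ↦ -y`.
-/

/-- If `ℓ² ∣ ay - bx`, then `x + iy = (j + ik)(a + ib)` for a Gaussian unit `j + ik`. -/
lemma eq_of_sq_dvd_cross {p a b x y : ℤ} (hp : p ≠ 0) (hab : a ^ 2 + b ^ 2 = p ^ 2)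
    (hxy : x ^ 2 + y ^ 2 = p ^ 2) (h : p ^ 2 ∣ a * y - b * x) :
    (x = a ∧ y = b) ∨ (x = -a ∧ y = -b) ∨ (x = -b ∧ y = a) ∨ (x = b ∧ y = -a) := by
  obtain ⟨k, hk⟩ := h
  have hp2 : p ^ 2 ≠ 0 := pow_ne_zero 2 hp
  have hsum : (a * x + b * y) ^ 2 + (a * y - b * x) ^ 2 = (p ^ 2) ^ 2 := by
    linear_combination (x ^ 2 + y ^ 2) * hab + p ^ 2 * hxy
  have hj : p ^ 2 ∣ a * x + b * y := by
    rw [← Int.pow_dvd_pow_iff two_ne_zero]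
    refine ⟨1 - k ^ 2, ?_⟩
    rw [hk] at hsum
    linear_combination hsum
  obtain ⟨j, hj⟩ := hj
  have hjk : j ^ 2 + k ^ 2 = 1 := by
    apply mul_left_cancel₀ (pow_ne_zero 2 hp2)
    rw [hk, hj] at hsum
    linear_combination hsum
  have hx : x = a * j - b * k := by
    apply mul_left_cancel₀ hp2
    linear_combination a * hj - b * hk - x * hab
  have hy : y = b * j + a * k := by
    apply mul_left_cancel₀ hp2
    linear_combination b * hj + a * hk - y * hab
  have hj1 : j ≤ 1 := by nlinarith [sq_nonneg k]
  have hj2 : -1 ≤ j := by nlinarith [sq_nonneg k]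
  have hk1 : k ≤ 1 := by nlinarith [sq_nonneg j]
  have hk2 : -1 ≤ k := by nlinarith [sq_nonneg j]
  clear hk hj hsum
  interval_cases j <;> interval_cases k <;> simp_all

/-- for a prime `ℓ ≡ 1 (mod 4)` and `m, n` with `m² + n² = ℓ`, the integer
solutions of `x² + y² = ℓ²` with `ℓ ∤ x` are exactly the eight pairs
`(±(m²−n²), ±2mn)`, `(±2mn, ±(m²−n²))`. -/
theorem stmt6 (ℓ : ℕ) (hℓ : ℓ.Prime) (h4 : ℓ % 4 = 1)
    (m n : ℤ) (hmn : m ^ 2 + n ^ 2 = (ℓ : ℤ)) :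
    {P : ℤ × ℤ | P.1 ^ 2 + P.2 ^ 2 = (ℓ : ℤ) ^ 2 ∧ ¬ ((ℓ : ℤ) ∣ P.1)} =
      ({(m ^ 2 - n ^ 2, 2 * m * n), (m ^ 2 - n ^ 2, -(2 * m * n)),
        (-(m ^ 2 - n ^ 2), 2 * m * n), (-(m ^ 2 - n ^ 2), -(2 * m * n)),
        (2 * m * n, m ^ 2 - n ^ 2), (2 * m * n, -(m ^ 2 - n ^ 2)),
        (-(2 * m * n), m ^ 2 - n ^ 2), (-(2 * m * n), -(m ^ 2 - n ^ 2))} : Set (ℤ × ℤ)) := by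
  have hp : Prime (ℓ : ℤ) := Nat.prime_iff_prime_int.mp hℓ
  have hp0 : (ℓ : ℤ) ≠ 0 := hp.ne_zero
  have h2 : ¬ (ℓ : ℤ) ∣ 2 := by
    intro h
    have h' : ℓ ∣ 2 := by exact_mod_cast h
    have := (Nat.prime_dvd_prime_iff_eq hℓ Nat.prime_two).mp h'
    omega
  -- In a sum of two squares divisible by `ℓ`, divisibility passes from one term to the other.
  have swap : ∀ u v : ℤ, (ℓ : ℤ) ∣ u ^ 2 + v ^ 2 → (ℓ : ℤ) ∣ u → (ℓ : ℤ) ∣ v := by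
    intro u v h hu
    exact hp.dvd_of_dvd_pow ((dvd_add_right (dvd_pow hu two_ne_zero)).mp h)
  have hnot : ¬ ((ℓ : ℤ) ∣ m ∧ (ℓ : ℤ) ∣ n) := by
    rintro ⟨⟨c, hc⟩, ⟨d, hd⟩⟩
    apply hp.not_isUnit
    refine IsUnit.of_mul_eq_one (c ^ 2 + d ^ 2) ?_
    apply mul_left_cancel₀ hp0
    rw [hc, hd] at hmn
    linear_combination hmn
  have hmn' : (ℓ : ℤ) ∣ m ^ 2 + n ^ 2 := hmn ▸ dvd_rfl
  have hnm' : (ℓ : ℤ) ∣ n ^ 2 + m ^ 2 := by rwa [add_comm]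
  have hab : (m ^ 2 - n ^ 2) ^ 2 + (2 * m * n) ^ 2 = (ℓ : ℤ) ^ 2 := by
    rw [← hmn]; ring
  have hb : ¬ (ℓ : ℤ) ∣ 2 * m * n := by
    intro h
    rcases hp.dvd_or_dvd h with h | h
    · rcases hp.dvd_or_dvd h with h | h
      · exact h2 h
      · exact hnot ⟨h, swap m n hmn' h⟩
    · exact hnot ⟨swap n m hnm' h, h⟩
  have ha : ¬ (ℓ : ℤ) ∣ m ^ 2 - n ^ 2 := fun h =>
    hb (swap _ _ (hab ▸ dvd_pow_self _ two_ne_zero) h)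
  generalize m ^ 2 - n ^ 2 = a at *
  generalize 2 * m * n = b at *
  ext ⟨x, y⟩
  simp only [Set.mem_ofPred_eq, Set.mem_insert_iff, Set.mem_singleton_iff, Prod.mk.injEq]
  constructor
  · rintro ⟨hxy, hx⟩
    have hy : ¬ (ℓ : ℤ) ∣ y := fun h => hx (swap y x
      (by rw [add_comm, hxy]; exact dvd_pow_self _ two_ne_zero) h)
    have hprod : (ℓ : ℤ) ^ 2 ∣ (a * y - b * x) * (a * y + b * x) :=
      ⟨a ^ 2 - x ^ 2, by linear_combination a ^ 2 * hxy - x ^ 2 * hab⟩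
    by_cases h : (ℓ : ℤ) ∣ a * y - b * x
    · have h' : ¬ (ℓ : ℤ) ∣ a * y + b * x := by
        intro h'
        have h3 : (ℓ : ℤ) ∣ 2 * (a * y) := by
          have := dvd_add h h'
          ring_nf at this ⊢
          exact this
        rcases hp.dvd_or_dvd h3 with h3 | h3
        · exact h2 h3
        · exact (hp.dvd_or_dvd h3).elim ha hy
      have := eq_of_sq_dvd_cross hp0 hab hxy (hp.pow_dvd_of_dvd_mul_right 2 h' hprod)
      rcases this with ⟨hX, hY⟩ | ⟨hX, hY⟩ | ⟨hX, hY⟩ | ⟨hX, hY⟩ <;> simp [hX, hY]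
    · have h4 := hp.pow_dvd_of_dvd_mul_left 2 h hprod
      -- The conjugate solution `(x, -y)` satisfies the hypothesis of the lemma.
      have := eq_of_sq_dvd_cross (x := x) (y := -y) hp0 hab (by rw [neg_sq, hxy])
        (by rw [← dvd_neg]; convert h4 using 1; ring)
      simp only [neg_eq_iff_eq_neg, neg_neg] at this
      rcases this with ⟨hX, hY⟩ | ⟨hX, hY⟩ | ⟨hX, hY⟩ | ⟨hX, hY⟩ <;> simp [hX, hY]
  · have hba : b ^ 2 + a ^ 2 = (ℓ : ℤ) ^ 2 := by rw [add_comm, hab]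
    rintro (⟨rfl, rfl⟩ | ⟨rfl, rfl⟩ | ⟨rfl, rfl⟩ | ⟨rfl, rfl⟩ |
      ⟨rfl, rfl⟩ | ⟨rfl, rfl⟩ | ⟨rfl, rfl⟩ | ⟨rfl, rfl⟩) <;>
      (try simp only [neg_sq, dvd_neg]) <;> constructor <;> assumption
end

section
/- Let p ≡ 3 (mod 4) and ℓ be primes with p > 4ℓ². Suppose μ ∈ ℍ[ℚ,−1,−p] satisfies ℓ·μ ∈ O, Nrd(μ) = 1, and μ ∉ {1, −1, i, −i}. Then ℓ ≡ 1 (mod 4) and μ = (x + y·i)/ℓ for some integers x, y with ℓ ∤ x and x² + y² = ℓ². -/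
/-!
Write `ℓμ = A + B·i + C·(1+j)/2 + D·(i+k)/2`. Multiplying `Nrd(ℓμ) = ℓ²` by `4` gives
`(2A+C)² + (2B+D)² + p(C² + D²) = 4ℓ²`, so `p > 4ℓ²` forces `C = D = 0` and `A² + B² = ℓ²`.
If `ℓ ∣ A`, this leaves only `(A, B) = (±ℓ, 0)` or `(0, ±ℓ)`, that is `μ ∈ {±1, ±i}`. Otherwise
`-1` is a square modulo `ℓ`, so `ℓ ≢ 3 (mod 4)`, and `ℓ = 2` is excluded modulo `4`.
-/

open Quaternion

/-- The reduced norm of a quaternion: `Nrd x = x * star x` (a scalar). -/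
noncomputable def Nrd {c₁ c₂ : ℚ} (x : ℍ[ℚ, c₁, c₂]) : ℚ := (x * star x).re

/-- `x ∈ ℚ` is divisible by the integer `n` within `ℤ`. -/
def IntDvd (n : ℤ) (x : ℚ) : Prop := ∃ z : ℤ, x = (n : ℚ) * (z : ℚ)

/-- `I` is a left ideal of the (maximal order whose underlying set is) `Os`. -/
def IsLeftIdealOf {c₁ c₂ : ℚ} (Os : Set ℍ[ℚ, c₁, c₂]) (I : AddSubgroup ℍ[ℚ, c₁, c₂]) : Prop :=
  (I : Set ℍ[ℚ, c₁, c₂]) ⊆ Os ∧ ∀ x ∈ Os, ∀ y ∈ I, x * y ∈ I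

/-- The left ideal `I` has reduced norm `ℓ` (gcd of reduced norms of elements is `ℓ`). -/
def HasReducedNorm {c₁ c₂ : ℚ} (I : AddSubgroup ℍ[ℚ, c₁, c₂]) (ℓ : ℤ) : Prop :=
  (∀ α ∈ I, IntDvd ℓ (Nrd α)) ∧ ∀ d : ℤ, (∀ α ∈ I, IntDvd d (Nrd α)) → d ∣ ℓ

/-- The set `ℓO + I·r = {ℓ·x + y·r : x ∈ Os, y ∈ I}`. -/
def shiftSet {c₁ c₂ : ℚ} (ℓ : ℕ) (Os I : Set ℍ[ℚ, c₁, c₂]) (r : ℍ[ℚ, c₁, c₂]) :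
    Set ℍ[ℚ, c₁, c₂] :=
  {z | ∃ x ∈ Os, ∃ y ∈ I, z = (ℓ : ℍ[ℚ, c₁, c₂]) * x + y * r}

/-- The quaternion algebra `ℍ[ℚ, −1, −p]`. -/
abbrev H1 (p : ℕ) : Type := ℍ[ℚ, -1, -(p : ℚ)]

def qi (p : ℕ) : H1 p := ⟨0, 1, 0, 0⟩
def qj (p : ℕ) : H1 p := ⟨0, 0, 1, 0⟩
def qk (p : ℕ) : H1 p := ⟨0, 0, 0, 1⟩

/-- The maximal order `O = ℤ·1 + ℤ·i + ℤ·(1+j)/2 + ℤ·(i+k)/2` of `ℍ[ℚ,−1,−p]`,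
the endomorphism ring of `y² = x³ + x` over `𝔽_{p²}` (as a set). -/
def O1728 (p : ℕ) : Set (H1 p) :=
  {z | ∃ A B C D : ℤ, z = (A : H1 p) + B • qi p +
    C • (⟨1/2, 0, 1/2, 0⟩ : H1 p) + D • (⟨0, 1/2, 0, 1/2⟩ : H1 p)}

/-- From `x² + y² ≡ 0` with `x` invertible modulo `ℓ`, the class `-1` is a square modulo `ℓ`, which
excludes `ℓ ≡ 3 (mod 4)`; for `ℓ = 2` an odd `x` makes `x² + y²` nonzero modulo `4`. -/
lemma mod_four_eq_one_of_sq_add_sq {ℓ : ℕ} (hℓ : ℓ.Prime) {x y : ℤ} (hx : ¬ (ℓ : ℤ) ∣ x)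
    (h : x ^ 2 + y ^ 2 = (ℓ : ℤ) ^ 2) : ℓ % 4 = 1 := by
  have : Fact ℓ.Prime := ⟨hℓ⟩
  rcases hℓ.eq_two_or_odd with rfl | hodd
  · exfalso
    have hx1 : x % 4 = 1 ∨ x % 4 = 3 := by push_cast at hx; omega
    have hm : (x ^ 2 + y ^ 2) % 4 = 0 := by rw [h]; norm_num
    have hy1 : y % 4 = 0 ∨ y % 4 = 1 ∨ y % 4 = 2 ∨ y % 4 = 3 := by omega
    rcases hx1 with a | a <;> rcases hy1 with b | b | b | b <;>
      simp [pow_two, Int.add_emod, Int.mul_emod, a, b] at hm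
  · have hx0 : (x : ZMod ℓ) ≠ 0 := fun h0 => hx ((ZMod.intCast_zmod_eq_zero_iff_dvd x ℓ).1 h0)
    have hz : (y : ZMod ℓ) ^ 2 = -(x : ZMod ℓ) ^ 2 := by
      have := congrArg (Int.cast : ℤ → ZMod ℓ) h
      push_cast at this
      simp only [ZMod.natCast_self] at this
      linear_combination this
    have := ZMod.mod_four_ne_three_of_sq_eq_neg_sq' hx0 hz
    omega

/-- The only integer points with abscissa divisible by `ℓ` on the circle of radius `ℓ` are its
four intersections with the axes. -/
lemma axis_of_dvd {ℓ x y : ℤ} (hℓ : 0 < ℓ) (hx : ℓ ∣ x) (h : x ^ 2 + y ^ 2 = ℓ ^ 2) :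
    (x = ℓ ∧ y = 0) ∨ (x = -ℓ ∧ y = 0) ∨ (x = 0 ∧ y = ℓ) ∨ (x = 0 ∧ y = -ℓ) := by
  obtain ⟨a, rfl⟩ := hx
  have hl : (ℓ * a) ^ 2 ≤ ℓ ^ 2 := by nlinarith [sq_nonneg y]
  have ha : a ^ 2 ≤ 1 := by
    have : 0 < ℓ ^ 2 := by positivity
    nlinarith
  have h1 : -1 ≤ a := by nlinarith
  have h2 : a ≤ 1 := by nlinarith
  interval_cases a
  · have : y ^ 2 = 0 := by linarith
    right; left; exact ⟨by ring, by simpa using this⟩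
  · have : y ^ 2 = ℓ ^ 2 := by linarith
    rcases sq_eq_sq_iff_eq_or_eq_neg.1 this with h | h <;> simp [h]
  · have : y ^ 2 = 0 := by linarith
    left; exact ⟨by ring, by simpa using this⟩

/-- Lemma 3.3(1): for primes `p ≡ 3 (mod 4)` and `ℓ` with `p > 4ℓ²`, if
`μ ∈ ℓ⁻¹O` has `Nrd(μ) = 1` and `μ ∉ {±1, ±i}`, then `ℓ ≡ 1 (mod 4)` and
`μ = (x + yi)/ℓ` with `ℓ ∤ x` and `x² + y² = ℓ²`. -/
theorem stmt8 (p ℓ : ℕ) (hp : p.Prime) (hℓ : ℓ.Prime)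
    (hp4 : p % 4 = 3) (hpl : 4 * ℓ ^ 2 < p)
    (μ : H1 p) (hμO : (ℓ : H1 p) * μ ∈ O1728 p) (hμn : Nrd μ = 1)
    (hμ : μ ∉ ({1, -1, qi p, -qi p} : Set (H1 p))) :
    ℓ % 4 = 1 ∧ ∃ x y : ℤ, ¬ ((ℓ : ℤ) ∣ x) ∧ x ^ 2 + y ^ 2 = (ℓ : ℤ) ^ 2 ∧
      (ℓ : H1 p) * μ = (x : H1 p) + y • qi p := by
  obtain ⟨A, B, C, D, hE⟩ := hμO
  obtain ⟨t, u, v, w⟩ := μ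
  have hl0 : (ℓ : ℚ) ≠ 0 := by exact_mod_cast hℓ.ne_zero
  have hlpos : (0 : ℤ) < ℓ := by exact_mod_cast hℓ.pos
  have e1 : (ℓ : ℚ) * t = A + C / 2 := by
    have := congrArg QuaternionAlgebra.re hE
    simpa [qi, div_eq_mul_inv] using this
  have e2 : (ℓ : ℚ) * u = B + D / 2 := by
    have := congrArg QuaternionAlgebra.imI hE
    simpa [qi, div_eq_mul_inv] using this
  have e3 : (ℓ : ℚ) * v = C / 2 := by
    have := congrArg QuaternionAlgebra.imJ hE
    simpa [qi, div_eq_mul_inv] using this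
  have e4 : (ℓ : ℚ) * w = D / 2 := by
    have := congrArg QuaternionAlgebra.imK hE
    simpa [qi, div_eq_mul_inv] using this
  have hn : t ^ 2 + u ^ 2 + p * v ^ 2 + p * w ^ 2 = 1 := by
    simp [Nrd] at hμn
    linear_combination hμn
  have hN : (2 * A + C) ^ 2 + (2 * B + D) ^ 2 + p * (C ^ 2 + D ^ 2) = 4 * (ℓ : ℤ) ^ 2 := by
    have : ((2 * A + C) ^ 2 + (2 * B + D) ^ 2 + p * (C ^ 2 + D ^ 2) : ℚ) = 4 * (ℓ : ℚ) ^ 2 := by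
      rw [show (2 * A + C : ℚ) = 2 * (ℓ * t) by rw [e1]; ring,
        show (2 * B + D : ℚ) = 2 * (ℓ * u) by rw [e2]; ring,
        show (C : ℚ) = 2 * (ℓ * v) by rw [e3]; ring,
        show (D : ℚ) = 2 * (ℓ * w) by rw [e4]; ring]
      linear_combination 4 * (ℓ : ℚ) ^ 2 * hn
    exact_mod_cast this
  have hpl' : 4 * (ℓ : ℤ) ^ 2 < p := by exact_mod_cast hpl
  have hCD : C ^ 2 + D ^ 2 = 0 := by
    by_contra hne
    have h1 : 1 ≤ C ^ 2 + D ^ 2 := by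
      have : 0 ≤ C ^ 2 + D ^ 2 := by positivity
      omega
    nlinarith [sq_nonneg (2 * A + C), sq_nonneg (2 * B + D)]
  have hC : C = 0 := by nlinarith [sq_nonneg C, sq_nonneg D]
  have hD : D = 0 := by nlinarith [sq_nonneg C, sq_nonneg D]
  subst hC hD
  have hAB : A ^ 2 + B ^ 2 = (ℓ : ℤ) ^ 2 := by linarith
  have hv : v = 0 := by simpa [hl0] using e3
  have hw : w = 0 := by simpa [hl0] using e4
  subst hv hw
  have hA : ¬ (ℓ : ℤ) ∣ A := by
    intro hd
    apply hμ
    rcases axis_of_dvd hlpos hd hAB with ⟨rfl, rfl⟩ | ⟨rfl, rfl⟩ | ⟨rfl, rfl⟩ | ⟨rfl, rfl⟩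
    · have ht : t = 1 := mul_left_cancel₀ hl0 (by simpa using e1)
      have hu : u = 0 := mul_left_cancel₀ hl0 (by simpa using e2)
      left; ext <;> simp [ht, hu]
    · have ht : t = -1 := mul_left_cancel₀ hl0 (by simpa using e1)
      have hu : u = 0 := mul_left_cancel₀ hl0 (by simpa using e2)
      right; left; ext <;> simp [ht, hu]
    · have ht : t = 0 := mul_left_cancel₀ hl0 (by simpa using e1)
      have hu : u = 1 := mul_left_cancel₀ hl0 (by simpa using e2)
      right; right; left; ext <;> simp [ht, hu, qi]
    · have ht : t = 0 := mul_left_cancel₀ hl0 (by simpa using e1)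
      have hu : u = -1 := mul_left_cancel₀ hl0 (by simpa using e2)
      right; right; right; ext <;> simp [ht, hu, qi]
  exact ⟨mod_four_eq_one_of_sq_add_sq hℓ hA hAB, A, B, hA, hAB, by simpa using hE⟩
end

section
/- Let ℓ be a prime with ℓ ≡ 1 (mod 3). Then there exist integers m, n with m² + m·n + n² = ℓ; and for any integers m, n with m² + m·n + n² = ℓ, the set of pairs (x, y) ∈ ℤ² with x² + x·y + y² = ℓ is exactly the twelve pairs ±(m,n), ±(n,m), ±(m+n,−n), ±(m+n,−m), ±(−n,m+n), ±(−m,m+n). -/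
/-!
Everything rests on `x² + xy + y²` being the norm form of the Eisenstein integers, although only
explicit identities in `ℤ` are used.

Existence: since `3 ∣ ℓ - 1`, there is a primitive cube root of unity `a` modulo `ℓ`
(`exists_cube_root`).  By Thue's pigeonhole argument (`thue`) there are `x, y`, not both zero, with
`x ≡ a y (mod ℓ)` and `x², y² < ℓ`.  Then `ℓ ∣ x² + xy + y²` and `0 < x² + xy + y² < 3ℓ`, so the
form takes the value `ℓ` or `2ℓ` at `(x, y)`; the value `2ℓ` is excluded modulo `4`.

Uniqueness: if `(x, y)` and `(m, n)` both represent `ℓ`, then `ℓ` divides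
`n²(x² + xy + y²) - y²(m² + mn + n²) = (nx - my)(nx + my + ny)`.  If `ℓ ∣ nx - my`, then
`x - yω` and `m - nω` differ by a unit, which gives six solutions
(`associated_solutions`).  Otherwise the same holds for the conjugate solution `(x + y, -y)`, which
gives the other six.
-/

lemma exists_cube_root (ℓ : ℕ) (hℓ : ℓ.Prime) (h3 : ℓ % 3 = 1) :
    ∃ a : ZMod ℓ, a ^ 2 + a + 1 = 0 := by
  have := Fact.mk hℓ
  have : Fact (Nat.Prime 3) := ⟨Nat.prime_three⟩
  obtain ⟨u, hu⟩ : ∃ u : (ZMod ℓ)ˣ, orderOf u = 3 := by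
    apply exists_prime_orderOf_dvd_card
    rw [ZMod.card_units]
    omega
  refine ⟨u, ?_⟩
  have h1 : (u : ZMod ℓ) ≠ 1 := by
    intro h
    rw [Units.val_eq_one] at h
    simp [h] at hu
  have h2 : (u : ZMod ℓ) ^ 3 = 1 := by
    have := pow_orderOf_eq_one u
    rw [hu] at this
    simpa using congrArg Units.val this
  have h4 : ((u : ZMod ℓ) - 1) * ((u : ZMod ℓ) ^ 2 + u + 1) = 0 := by linear_combination h2
  exact (mul_eq_zero.mp h4).resolve_left (sub_ne_zero.mpr h1)

/-- Thue's lemma: every residue modulo a prime is a quotient of two integers of absolute value less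
than `√ℓ`. -/
lemma thue (ℓ : ℕ) (hℓ : ℓ.Prime) (a : ZMod ℓ) :
    ∃ x y : ℤ, (x ≠ 0 ∨ y ≠ 0) ∧ (x : ZMod ℓ) = a * y ∧ x ^ 2 < ℓ ∧ y ^ 2 < ℓ := by
  have := Fact.mk hℓ
  set s := Nat.sqrt ℓ with hs
  have hlt : s * s < ℓ := by
    refine lt_of_le_of_ne (Nat.sqrt_le ℓ) fun h => ?_
    exact hℓ.prime.irreducible.not_isSquare ⟨s, h.symm⟩
  have hgt : ℓ < (s + 1) * (s + 1) := Nat.lt_succ_sqrt ℓ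
  let S := Finset.range (s + 1) ×ˢ Finset.range (s + 1)
  obtain ⟨p, hp, q, hq, hpq, heq⟩ :=
    Finset.exists_ne_map_eq_of_card_lt_of_maps_to (s := S) (t := (Finset.univ : Finset (ZMod ℓ)))
      (f := fun p => (p.1 : ZMod ℓ) - a * (p.2 : ZMod ℓ))
      (by simpa [S, ZMod.card] using hgt) (fun _ _ => Finset.mem_coe.mpr (Finset.mem_univ _))
  simp only [S, Finset.mem_product, Finset.mem_range] at hp hq
  have bound : ∀ i j : ℕ, i < s + 1 → j < s + 1 → ((i : ℤ) - j) ^ 2 < ℓ := by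
    intro i j hi hj
    have h1 : ((i : ℤ) - j) ^ 2 ≤ (s : ℤ) ^ 2 := sq_le_sq' (by omega) (by omega)
    have h2 : (s : ℤ) * s < ℓ := by exact_mod_cast hlt
    nlinarith
  refine ⟨(p.1 : ℤ) - q.1, (p.2 : ℤ) - q.2, ?_, ?_, bound _ _ hp.1 hq.1, bound _ _ hp.2 hq.2⟩
  · by_contra! h
    exact hpq (Prod.ext (by omega) (by omega))
  · push_cast
    linear_combination heq

lemma exists_rep (ℓ : ℕ) (hℓ : ℓ.Prime) (h3 : ℓ % 3 = 1) :
    ∃ m n : ℤ, m ^ 2 + m * n + n ^ 2 = (ℓ : ℤ) := by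
  obtain ⟨a, ha⟩ := exists_cube_root ℓ hℓ h3
  obtain ⟨x, y, hne, hxy, hx, hy⟩ := thue ℓ hℓ a
  have hdvd : (ℓ : ℤ) ∣ x ^ 2 + x * y + y ^ 2 := by
    rw [← ZMod.intCast_zmod_eq_zero_iff_dvd]
    push_cast
    rw [hxy]
    linear_combination (y : ZMod ℓ) ^ 2 * ha
  obtain ⟨k, hk⟩ := hdvd
  have hℓ0 : (0 : ℤ) < ℓ := by exact_mod_cast hℓ.pos
  have hpos : 0 < x ^ 2 + x * y + y ^ 2 := by
    rcases hne with h | h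
    · have := sq_pos_of_ne_zero h
      nlinarith [sq_nonneg (x + 2 * y)]
    · have := sq_pos_of_ne_zero h
      nlinarith [sq_nonneg (2 * x + y)]
  have hk0 : 0 < k := by
    rw [hk] at hpos
    exact pos_of_mul_pos_right hpos hℓ0.le
  have hk3 : k < 3 := by
    have : (ℓ : ℤ) * k < ℓ * 3 := by nlinarith [sq_nonneg (x - y)]
    exact lt_of_mul_lt_mul_left this hℓ0.le
  obtain rfl | rfl : k = 1 ∨ k = 2 := by omega
  · exact ⟨x, y, by linarith⟩
  · exfalso
    -- An even value of the form forces `x, y` even, hence `4 ∣ 2ℓ` and `ℓ` is even.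
    have hodd : ℓ % 2 = 1 := by
      rcases hℓ.eq_two_or_odd with h | h
      · subst h; omega
      · exact h
    obtain ⟨c, rfl | rfl⟩ := Int.even_or_odd' x <;> obtain ⟨d, rfl | rfl⟩ := Int.even_or_odd' y <;>
      ring_nf at hk <;> omega

/-- If the `ω`-coefficient `nx - my` of `(x - yω)` times the conjugate of `(m - nω)` is divisible by
the prime, then `x - yω` is a unit times `m - nω`; the six cases are the six Eisenstein units. -/
lemma associated_solutions (p : ℤ) (hp : Prime p) (m n x y : ℤ)
    (hmn : m ^ 2 + m * n + n ^ 2 = p) (hxy : x ^ 2 + x * y + y ^ 2 = p)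
    (h : p ∣ n * x - m * y) :
    (x = m ∧ y = n) ∨ (x = -m ∧ y = -n) ∨ (x = n ∧ y = -(m + n)) ∨ (x = -n ∧ y = m + n) ∨
      (x = m + n ∧ y = -m) ∨ (x = -(m + n) ∧ y = m) := by
  have hp0 : p ≠ 0 := hp.ne_zero
  obtain ⟨A, hA⟩ := h
  -- The constant coefficient `x(m + n) + yn` is divisible by `p` too: the product has norm `p²`.
  have key : (x * (m + n) + y * n) ^ 2 - (x * (m + n) + y * n) * (n * x - m * y)
      + (n * x - m * y) ^ 2 = (x ^ 2 + x * y + y ^ 2) * (m ^ 2 + m * n + n ^ 2) := by ring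
  rw [hmn, hxy, hA] at key
  have hsq : p ∣ (x * (m + n) + y * n) ^ 2 :=
    ⟨p + (x * (m + n) + y * n) * A - p * A ^ 2, by linear_combination key⟩
  obtain ⟨B, hB⟩ := hp.dvd_of_dvd_pow hsq
  have hAB : B ^ 2 - A * B + A ^ 2 = 1 := by
    rw [hB] at key
    have : p * p * (B ^ 2 - A * B + A ^ 2) = p * p * 1 := by linear_combination key
    exact mul_left_cancel₀ (mul_ne_zero hp0 hp0) this
  have hx : x = B * m + A * n := by
    apply mul_left_cancel₀ hp0
    linear_combination m * hB + n * hA - x * hmn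
  have hy : y = B * n - A * (m + n) := by
    apply mul_left_cancel₀ hp0
    linear_combination n * hB - (m + n) * hA - y * hmn
  have hA1 : A ≤ 1 := by nlinarith [sq_nonneg (2 * B - A)]
  have hA2 : -1 ≤ A := by nlinarith [sq_nonneg (2 * B - A)]
  have hB1 : B ≤ 1 := by nlinarith [sq_nonneg (2 * A - B)]
  have hB2 : -1 ≤ B := by nlinarith [sq_nonneg (2 * A - B)]
  clear hsq key hA hB hmn hxy
  interval_cases A <;> interval_cases B <;> simp at hAB <;> omega

/-- for a prime `ℓ ≡ 1 (mod 3)`, `ℓ` is represented by `x² + xy + y²`,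
and for any `m, n` with `m² + mn + n² = ℓ`, the integer solutions of `x² + xy + y² = ℓ`
are exactly the twelve pairs `±(m,n)`, `±(n,m)`, `±(m+n,−n)`, `±(m+n,−m)`, `±(−n,m+n)`,
`±(−m,m+n)`. -/
theorem stmt10 (ℓ : ℕ) (hℓ : ℓ.Prime) (h3 : ℓ % 3 = 1) :
    (∃ m n : ℤ, m ^ 2 + m * n + n ^ 2 = (ℓ : ℤ)) ∧
    ∀ m n : ℤ, m ^ 2 + m * n + n ^ 2 = (ℓ : ℤ) →
      {P : ℤ × ℤ | P.1 ^ 2 + P.1 * P.2 + P.2 ^ 2 = (ℓ : ℤ)} =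
        ({(m, n), (-m, -n), (n, m), (-n, -m),
          (m + n, -n), (-(m + n), n), (m + n, -m), (-(m + n), m),
          (-n, m + n), (n, -(m + n)), (-m, m + n), (m, -(m + n))} : Set (ℤ × ℤ)) := by
  refine ⟨exists_rep ℓ hℓ h3, fun m n hmn => ?_⟩
  have hp : Prime (ℓ : ℤ) := Nat.prime_iff_prime_int.mp hℓ
  ext ⟨x, y⟩
  simp only [Set.mem_ofPred_eq, Set.mem_insert_iff, Set.mem_singleton_iff, Prod.mk.injEq]
  constructor
  · intro hxy
    have hdvd : (ℓ : ℤ) ∣ (n * x - m * y) * (n * (x + y) - m * -y) :=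
      ⟨n ^ 2 - y ^ 2, by linear_combination n ^ 2 * hxy - y ^ 2 * hmn⟩
    rcases hp.dvd_or_dvd hdvd with h | h
    · rcases associated_solutions ℓ hp m n x y hmn hxy h with
        ⟨hx, hy⟩ | ⟨hx, hy⟩ | ⟨hx, hy⟩ | ⟨hx, hy⟩ | ⟨hx, hy⟩ | ⟨hx, hy⟩ <;>
        simp [hx, hy]
    · rcases associated_solutions ℓ hp m n (x + y) (-y) hmn (by linear_combination hxy) h with
        ⟨hx, hy⟩ | ⟨hx, hy⟩ | ⟨hx, hy⟩ | ⟨hx, hy⟩ | ⟨hx, hy⟩ | ⟨hx, hy⟩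
      · obtain ⟨rfl, rfl⟩ : x = m + n ∧ y = -n := by omega
        simp
      · obtain ⟨rfl, rfl⟩ : x = -(m + n) ∧ y = n := by omega
        simp
      · obtain ⟨rfl, rfl⟩ : x = -m ∧ y = m + n := by omega
        simp
      · obtain ⟨rfl, rfl⟩ : x = m ∧ y = -(m + n) := by omega
        simp
      · obtain ⟨rfl, rfl⟩ : x = n ∧ y = m := by omega
        simp
      · obtain ⟨rfl, rfl⟩ : x = -n ∧ y = -m := by omega
        simp
  · rintro (⟨rfl, rfl⟩ | ⟨rfl, rfl⟩ | ⟨rfl, rfl⟩ | ⟨rfl, rfl⟩ | ⟨rfl, rfl⟩ | ⟨rfl, rfl⟩ |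
      ⟨rfl, rfl⟩ | ⟨rfl, rfl⟩ | ⟨rfl, rfl⟩ | ⟨rfl, rfl⟩ | ⟨rfl, rfl⟩ | ⟨rfl, rfl⟩) <;>
      linear_combination hmn
end

section
/- Let ℓ be a prime with ℓ ≡ 1 (mod 3) and let m, n be integers with m² + m·n + n² = ℓ. Put a = m² − n², b = n² + 2mn, and c = m² + 2mn. Then the set of pairs (x, y) ∈ ℤ² with x² + x·y + y² = ℓ² and ℓ ∤ x is exactly the twelve pairs ±(a,b), ±(b,a), ±(−a,c), ±(−b,c), ±(c,−a), ±(c,−b). -/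
/-!
Write `N(x, y) = x² + xy + y²`, the norm of the Eisenstein integer `z = x - ωy`, where `ω² + ω + 1 = 0`.
With `π = m - ωn` of norm `ℓ`, one has `π² = a - ωb` and `c = a + b`.  If `N(z) = ℓ²` and `ℓ ∤ z`, then
`z` is a unit multiple of `π²` or of its conjugate; the six units give twelve pairs.

The argument is carried out over `ℤ`.  The `ω`-coordinates of `z · conj(π²)` and `z · π²` have product
`ℓ²(y² - b²)` and are not both divisible by `ℓ`, so one of them is divisible by `ℓ²`
(`sq_dvd_or_sq_dvd`).  As the norm of that product is `ℓ⁴`, its other coordinate is divisible by `ℓ²` as well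
(`exists_unit_coords`), and the quotient has norm `1`, hence is one of the six units (`unit_cases`).
Conversely, `ℓ` divides none of `a`, `b`, `c`, since otherwise it would divide `2a + b ≡ -3n² (mod ℓ)`.
-/

/-- The six units of the Eisenstein integers, in coordinates. -/
lemma unit_cases {j k : ℤ} (h : j ^ 2 + j * k + k ^ 2 = 1) :
    (j = 1 ∧ k = 0) ∨ (j = -1 ∧ k = 0) ∨ (j = 0 ∧ k = 1) ∨ (j = 0 ∧ k = -1) ∨
      (j = 1 ∧ k = -1) ∨ (j = -1 ∧ k = 1) := by
  have hj1 : j ≤ 1 := by nlinarith [sq_nonneg (j + 2 * k)]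
  have hj2 : -1 ≤ j := by nlinarith [sq_nonneg (j + 2 * k)]
  have hk1 : k ≤ 1 := by nlinarith [sq_nonneg (k + 2 * j)]
  have hk2 : -1 ≤ k := by nlinarith [sq_nonneg (k + 2 * j)]
  interval_cases j <;> interval_cases k <;> simp_all

/-- An element of norm `ℓ⁴` whose second coordinate is divisible by `ℓ²` is `ℓ²` times an element
of norm `1`. -/
lemma exists_unit_coords {p u D : ℤ} (hp : Prime p) (h : u ^ 2 + u * D + D ^ 2 = p ^ 4)
    (hD : p ^ 2 ∣ D) :
    ∃ j k : ℤ, u = p ^ 2 * j ∧ D = p ^ 2 * k ∧ j ^ 2 + j * k + k ^ 2 = 1 := by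
  obtain ⟨k, rfl⟩ := hD
  have hu : p ∣ u := hp.dvd_of_dvd_pow (n := 2)
    ⟨p ^ 3 - u * p * k - p ^ 3 * k ^ 2, by linear_combination h⟩
  obtain ⟨v, rfl⟩ := hu
  have h' : v ^ 2 + v * p * k + p ^ 2 * k ^ 2 = p ^ 2 := by
    apply mul_left_cancel₀ (pow_ne_zero 2 hp.ne_zero)
    linear_combination h
  have hv : p ∣ v := hp.dvd_of_dvd_pow (n := 2)
    ⟨p - v * k - p * k ^ 2, by linear_combination h'⟩
  obtain ⟨j, rfl⟩ := hv
  refine ⟨j, k, by ring, rfl, ?_⟩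
  apply mul_left_cancel₀ (pow_ne_zero 2 hp.ne_zero)
  linear_combination h'

lemma dvd_snd_of_dvd_fst {p x y : ℤ} (hp : Prime p) (h : x ^ 2 + x * y + y ^ 2 = p ^ 2)
    (hx : p ∣ x) : p ∣ y := by
  obtain ⟨t, rfl⟩ := hx
  exact hp.dvd_of_dvd_pow (n := 2) ⟨p - p * t ^ 2 - t * y, by linear_combination h⟩

/-- The prime `ℓ` does not divide `2a + b`, which is `-3n²` modulo `ℓ`. -/
lemma not_dvd_two_a_add_b {p m n : ℤ} (hp : Prime p) (hp3 : ¬ p ∣ 3)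
    (hmn : m ^ 2 + m * n + n ^ 2 = p) :
    ¬ p ∣ 2 * (m ^ 2 - n ^ 2) + (n ^ 2 + 2 * m * n) := by
  rintro ⟨t, ht⟩
  have h : p ∣ 3 * n ^ 2 := ⟨2 - t, by linear_combination 2 * hmn - ht⟩
  have hn : p ∣ n := hp.dvd_of_dvd_pow ((hp.dvd_or_dvd h).resolve_left hp3)
  have hm : p ∣ m := by
    obtain ⟨s, rfl⟩ := hn
    exact hp.dvd_of_dvd_pow (n := 2) ⟨1 - m * s - p * s ^ 2, by linear_combination hmn⟩
  obtain ⟨s, rfl⟩ := hn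
  obtain ⟨r, rfl⟩ := hm
  -- Both coordinates divisible by `p` would give `p² ∣ p`.
  refine hp.not_isUnit (IsUnit.of_mul_eq_one (r ^ 2 + r * s + s ^ 2) ?_)
  apply mul_left_cancel₀ hp.ne_zero
  linear_combination hmn

/-- One of the `ω`-coordinates of `z · conj(α)` and `z · α`, for `z = x - ωy` and `α = a - ωb` of norm
`p²`, is divisible by `p²`. -/
lemma sq_dvd_or_sq_dvd {p a b x y : ℤ} (hp : Prime p)
    (hab : a ^ 2 + a * b + b ^ 2 = p ^ 2) (hxy : x ^ 2 + x * y + y ^ 2 = p ^ 2)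
    (hx : ¬ p ∣ x) (h2 : ¬ p ∣ 2 * a + b) :
    p ^ 2 ∣ y * a - x * b ∨ p ^ 2 ∣ y * a + x * b + y * b := by
  have hy : ¬ p ∣ y := fun h => hx (dvd_snd_of_dvd_fst hp (by linear_combination hxy) h)
  have hprod : p ^ 2 ∣ (y * a - x * b) * (y * a + x * b + y * b) :=
    ⟨y ^ 2 - b ^ 2, by linear_combination y ^ 2 * hab - b ^ 2 * hxy⟩
  by_cases h : p ∣ y * a - x * b
  · left
    refine hp.pow_dvd_of_dvd_mul_right 2 (fun h' => ?_) hprod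
    have hs : p ∣ y * (2 * a + b) := by
      have := dvd_add h h'
      ring_nf at this ⊢
      exact this
    exact (hp.dvd_or_dvd hs).elim hy h2
  · right
    exact hp.pow_dvd_of_dvd_mul_left 2 h hprod

/-- for a prime `ℓ ≡ 1 (mod 3)` and `m, n` with `m² + mn + n² = ℓ`, with
`a = m²−n²`, `b = n²+2mn`, `c = m²+2mn`, the integer solutions of `x² + xy + y² = ℓ²`
with `ℓ ∤ x` are exactly the twelve pairs `±(a,b)`, `±(b,a)`, `±(−a,c)`, `±(−b,c)`,
`±(c,−a)`, `±(c,−b)`. -/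
theorem stmt11 (ℓ : ℕ) (hℓ : ℓ.Prime) (h3 : ℓ % 3 = 1)
    (m n : ℤ) (hmn : m ^ 2 + m * n + n ^ 2 = (ℓ : ℤ)) :
    {P : ℤ × ℤ | P.1 ^ 2 + P.1 * P.2 + P.2 ^ 2 = (ℓ : ℤ) ^ 2 ∧ ¬ ((ℓ : ℤ) ∣ P.1)} =
      ({(m ^ 2 - n ^ 2, n ^ 2 + 2 * m * n), (-(m ^ 2 - n ^ 2), -(n ^ 2 + 2 * m * n)),
        (n ^ 2 + 2 * m * n, m ^ 2 - n ^ 2), (-(n ^ 2 + 2 * m * n), -(m ^ 2 - n ^ 2)),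
        (-(m ^ 2 - n ^ 2), m ^ 2 + 2 * m * n), (m ^ 2 - n ^ 2, -(m ^ 2 + 2 * m * n)),
        (-(n ^ 2 + 2 * m * n), m ^ 2 + 2 * m * n), (n ^ 2 + 2 * m * n, -(m ^ 2 + 2 * m * n)),
        (m ^ 2 + 2 * m * n, -(m ^ 2 - n ^ 2)), (-(m ^ 2 + 2 * m * n), m ^ 2 - n ^ 2),
        (m ^ 2 + 2 * m * n, -(n ^ 2 + 2 * m * n)), (-(m ^ 2 + 2 * m * n), n ^ 2 + 2 * m * n)}
        : Set (ℤ × ℤ)) := by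
  have hp : Prime (ℓ : ℤ) := Nat.prime_iff_prime_int.mp hℓ
  have hp3 : ¬ (ℓ : ℤ) ∣ 3 := by
    intro h
    have h' : ℓ ∣ 3 := by exact_mod_cast h
    have := (Nat.prime_dvd_prime_iff_eq hℓ Nat.prime_three).mp h'
    omega
  have h2 := not_dvd_two_a_add_b hp hp3 hmn
  have hab : (m ^ 2 - n ^ 2) ^ 2 + (m ^ 2 - n ^ 2) * (n ^ 2 + 2 * m * n) +
      (n ^ 2 + 2 * m * n) ^ 2 = (ℓ : ℤ) ^ 2 := by
    rw [← hmn]; ring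
  have hc : m ^ 2 + 2 * m * n = (m ^ 2 - n ^ 2) + (n ^ 2 + 2 * m * n) := by ring
  rw [hc]
  generalize m ^ 2 - n ^ 2 = a at *
  generalize n ^ 2 + 2 * m * n = b at *
  generalize (ℓ : ℤ) = p at *
  have hp2 : p ^ 2 ≠ 0 := pow_ne_zero 2 hp.ne_zero
  have hb : ¬ p ∣ b := fun h =>
    h2 (dvd_add ((dvd_snd_of_dvd_fst hp (by linear_combination hab) h).mul_left 2) h)
  have ha : ¬ p ∣ a := fun h => hb (dvd_snd_of_dvd_fst hp hab h)
  have hc' : ¬ p ∣ a + b := fun h =>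
    ha ((dvd_neg).mp (dvd_snd_of_dvd_fst (y := -a) hp (by linear_combination hab) h))
  ext ⟨x, y⟩
  simp only [Set.mem_ofPred_eq, Set.mem_insert_iff, Set.mem_singleton_iff, Prod.mk.injEq]
  constructor
  · rintro ⟨hxy, hx⟩
    rcases sq_dvd_or_sq_dvd hp hab hxy hx h2 with hD | hD
    · obtain ⟨j, k, hj, hk, hu⟩ := exists_unit_coords (u := x * a + x * b + y * b) hp
        (by linear_combination (x ^ 2 + x * y + y ^ 2) * hab + p ^ 2 * hxy) hD
      have ex : x = j * a - k * b := mul_left_cancel₀ hp2 (by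
        linear_combination a * hj - b * hk - x * hab)
      have ey : y = k * a + j * b + k * b := mul_left_cancel₀ hp2 (by
        linear_combination (a + b) * hk + b * hj - y * hab)
      rcases unit_cases hu with ⟨rfl, rfl⟩ | ⟨rfl, rfl⟩ | ⟨rfl, rfl⟩ | ⟨rfl, rfl⟩ |
        ⟨rfl, rfl⟩ | ⟨rfl, rfl⟩ <;> grind
    · obtain ⟨j, k, hj, hk, hu⟩ := exists_unit_coords (u := x * a - y * b) hp
        (by linear_combination (x ^ 2 + x * y + y ^ 2) * hab + p ^ 2 * hxy) hD
      have ex : x = j * (a + b) + k * b := mul_left_cancel₀ hp2 (by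
        linear_combination (a + b) * hj + b * hk - x * hab)
      have ey : y = k * a - j * b := mul_left_cancel₀ hp2 (by
        linear_combination a * hk - b * hj - y * hab)
      rcases unit_cases hu with ⟨rfl, rfl⟩ | ⟨rfl, rfl⟩ | ⟨rfl, rfl⟩ | ⟨rfl, rfl⟩ |
        ⟨rfl, rfl⟩ | ⟨rfl, rfl⟩ <;> grind
  · rintro (⟨rfl, rfl⟩ | ⟨rfl, rfl⟩ | ⟨rfl, rfl⟩ | ⟨rfl, rfl⟩ | ⟨rfl, rfl⟩ | ⟨rfl, rfl⟩ |
      ⟨rfl, rfl⟩ | ⟨rfl, rfl⟩ | ⟨rfl, rfl⟩ | ⟨rfl, rfl⟩ | ⟨rfl, rfl⟩ | ⟨rfl, rfl⟩) <;>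
    exact ⟨by linear_combination hab, by first | assumption | (rw [dvd_neg]; assumption)⟩
end

section
/- Let p ≡ 2 (mod 3) and ℓ be primes with p > 3ℓ². Suppose μ ∈ ℍ[ℚ,−3,−p] satisfies ℓ·μ ∈ O, Nrd(μ) = 1, and μ ∉ {1, −1, ε, −ε, ε̄, −ε̄}. Then ℓ ≡ 1 (mod 3) and μ = (x + y·ε)/ℓ for some integers x, y with ℓ ∤ x and x² + x·y + y² = ℓ². -/
/-!
In coordinates, `ℓμ = A + Bε + C(i+k)/3 + D(j+k)/2` has reduced norm
`A² + AB + B² + BC + C²/3 + p(3D² + 3CD + C²)/3 = ℓ²`, where the terms free of `p` form a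
sum of squares. Since `p > 3ℓ²`, the nonnegative integer `3D² + 3CD + C²` is less than `1`, which
forces `C = D = 0`, so `ℓμ = A + Bε` with `A² + AB + B² = ℓ²` (`coords_of_norm`).

If `ℓ ∣ A`, then `ℓ ∣ B` as well and `μ` is a norm-one element of `ℤ[ε]`, hence one of the six units
excluded by hypothesis (`eisenstein_units`). If `ℓ ∤ A`, then `B/A` is a root of `t² + t + 1`
modulo `ℓ`; for `ℓ ≡ 2 (mod 3)` this contradicts Fermat's little theorem, and for `ℓ = 3` a
congruence modulo `9` forces `3 ∣ A` (`mod_three_eq_one`).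
-/

open Quaternion

/-- The quaternion algebra `ℍ[ℚ, −3, −p]`. -/
abbrev H3 (p : ℕ) : Type := ℍ[ℚ, -3, -(p : ℚ)]

def qi3 (p : ℕ) : H3 p := ⟨0, 1, 0, 0⟩
def qj3 (p : ℕ) : H3 p := ⟨0, 0, 1, 0⟩
def qk3 (p : ℕ) : H3 p := ⟨0, 0, 0, 1⟩

/-- `ε = (1+i)/2`. -/
def eps (p : ℕ) : H3 p := ⟨1/2, 1/2, 0, 0⟩

/-- `ε̄ = (1−i)/2`. -/
def epsBar (p : ℕ) : H3 p := ⟨1/2, -(1/2), 0, 0⟩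

/-- The maximal order `O = ℤ·1 + ℤ·ε + ℤ·(i+k)/3 + ℤ·(j+k)/2` of `ℍ[ℚ,−3,−p]`,
the endomorphism ring of `y² = x³ + 1` over `𝔽_{p²}` (as a set). -/
def O0 (p : ℕ) : Set (H3 p) :=
  {z | ∃ A B C D : ℤ, z = (A : H3 p) + B • eps p +
    C • (⟨0, 1/3, 0, 1/3⟩ : H3 p) + D • (⟨0, 0, 1/2, 1/2⟩ : H3 p)}

/-- The norm equation (cleared of denominators) with `p > 3ℓ²` kills the `j`, `k` part. -/
lemma coords_of_norm {A B C D p ℓ : ℤ} (hpl : 3 * ℓ ^ 2 < p)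
    (h : 3 * (2 * A + B) ^ 2 + (3 * B + 2 * C) ^ 2
      + 4 * p * (3 * D ^ 2 + 3 * C * D + C ^ 2) = 12 * ℓ ^ 2) :
    C = 0 ∧ D = 0 ∧ A ^ 2 + A * B + B ^ 2 = ℓ ^ 2 := by
  have hp : 0 < p := by nlinarith [sq_nonneg ℓ]
  have hQ : 3 * D ^ 2 + 3 * C * D + C ^ 2 < 1 := by
    by_contra! hQ
    nlinarith [sq_nonneg (2 * A + B), sq_nonneg (3 * B + 2 * C),
      mul_le_mul_of_nonneg_left hQ hp.le]
  have hD : D = 0 := by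
    by_contra hD
    have : 1 ≤ D ^ 2 := by have := sq_pos_of_ne_zero hD; omega
    nlinarith [sq_nonneg (3 * D + 2 * C)]
  subst hD
  have hC : C = 0 := by
    by_contra hC
    have : 1 ≤ C ^ 2 := by have := sq_pos_of_ne_zero hC; omega
    nlinarith
  subst hC
  exact ⟨rfl, rfl, by nlinarith⟩

lemma eisenstein_units {a b : ℤ} (h : a ^ 2 + a * b + b ^ 2 = 1) :
    (a = 1 ∧ b = 0) ∨ (a = -1 ∧ b = 0) ∨ (a = 0 ∧ b = 1) ∨ (a = 0 ∧ b = -1) ∨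
      (a = 1 ∧ b = -1) ∨ (a = -1 ∧ b = 1) := by
  have ha1 : a ≤ 1 := by nlinarith [sq_nonneg (a + 2 * b)]
  have ha2 : -1 ≤ a := by nlinarith [sq_nonneg (a + 2 * b)]
  have hb1 : b ≤ 1 := by nlinarith [sq_nonneg (2 * a + b)]
  have hb2 : -1 ≤ b := by nlinarith [sq_nonneg (2 * a + b)]
  interval_cases a <;> interval_cases b <;> simp_all

lemma mod_three_eq_one {ℓ : ℕ} (hℓ : ℓ.Prime) {x y : ℤ} (hx : ¬ (ℓ : ℤ) ∣ x)
    (h : x ^ 2 + x * y + y ^ 2 = (ℓ : ℤ) ^ 2) : ℓ % 3 = 1 := by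
  have : Fact ℓ.Prime := ⟨hℓ⟩
  by_cases h3 : ℓ = 3
  · exfalso
    subst h3
    -- Modulo `3` the norm form is `(x - y)²`; substituting `x = y + 3k` gives `3 ∣ y²`.
    have hd : (3 : ℤ) ∣ (x - y) ^ 2 := ⟨3 - x * y, by push_cast at h; linarith⟩
    obtain ⟨k, hk⟩ := Int.prime_three.dvd_of_dvd_pow hd
    obtain rfl : x = y + 3 * k := by linarith
    have hy : (3 : ℤ) ∣ y ^ 2 := ⟨1 - k * y - k ^ 2, by push_cast at h; linarith⟩
    exact hx (by simpa using (Int.prime_three.dvd_of_dvd_pow hy))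
  have h0 : ℓ % 3 ≠ 0 := fun h0 =>
    h3 (((Nat.prime_dvd_prime_iff_eq Nat.prime_three hℓ).1 (Nat.dvd_of_mod_eq_zero h0)).symm)
  by_contra h1
  have h2 : ℓ % 3 = 2 := by omega
  have hX : (x : ZMod ℓ) ≠ 0 := fun h' => hx ((ZMod.intCast_zmod_eq_zero_iff_dvd x ℓ).1 h')
  have hE : (x : ZMod ℓ) ^ 2 + x * y + (y : ZMod ℓ) ^ 2 = 0 := by
    have := congrArg (Int.cast : ℤ → ZMod ℓ) h
    simpa using this
  obtain ⟨t, ht⟩ : ∃ t : ZMod ℓ, (y : ZMod ℓ) = t * x := ⟨y / x, by field_simp⟩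
  have hT : t ^ 2 + t + 1 = 0 := by
    have : (x : ZMod ℓ) ^ 2 * (t ^ 2 + t + 1) = 0 := by rw [ht] at hE; linear_combination hE
    exact (mul_eq_zero.1 this).resolve_left (pow_ne_zero 2 hX)
  have ht0 : t ≠ 0 := by
    rintro rfl
    simp at hT
  have hcube : t ^ 3 = 1 := by linear_combination (t - 1) * hT
  have hF := ZMod.pow_card_sub_one_eq_one ht0
  -- `ℓ - 1 ≡ 1 (mod 3)`, so Fermat and `t³ = 1` give `t = 1`.
  obtain ⟨k, hk⟩ : ∃ k, ℓ - 1 = 3 * k + 1 := ⟨ℓ / 3, by omega⟩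
  rw [hk, pow_succ, pow_mul, hcube, one_pow, one_mul] at hF
  rw [hF] at hT
  have h30 : ((3 : ℕ) : ZMod ℓ) = 0 := by push_cast; linear_combination hT
  exact h3 ((Nat.prime_dvd_prime_iff_eq hℓ Nat.prime_three).1 ((ZMod.natCast_eq_zero_iff 3 ℓ).1 h30))

/-- Lemma 3.7(1): for primes `p ≡ 2 (mod 3)` and `ℓ` with `p > 3ℓ²`, if
`μ ∈ ℓ⁻¹O` has `Nrd(μ) = 1` and `μ ∉ {±1, ±ε, ±ε̄}`, then `ℓ ≡ 1 (mod 3)` and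
`μ = (x + yε)/ℓ` with `ℓ ∤ x` and `x² + xy + y² = ℓ²`. -/
theorem stmt13 (p ℓ : ℕ) (hp : p.Prime) (hℓ : ℓ.Prime)
    (hp3 : p % 3 = 2) (hpl : 3 * ℓ ^ 2 < p)
    (μ : H3 p) (hμO : (ℓ : H3 p) * μ ∈ O0 p) (hμn : Nrd μ = 1)
    (hμ : μ ∉ ({1, -1, eps p, -eps p, epsBar p, -epsBar p} : Set (H3 p))) :
    ℓ % 3 = 1 ∧ ∃ x y : ℤ, ¬ ((ℓ : ℤ) ∣ x) ∧ x ^ 2 + x * y + y ^ 2 = (ℓ : ℤ) ^ 2 ∧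
      (ℓ : H3 p) * μ = (x : H3 p) + y • eps p := by
  have hl0 : (ℓ : ℚ) ≠ 0 := by exact_mod_cast hℓ.ne_zero
  obtain ⟨A, B, C, D, hz⟩ := hμO
  have e1 : (ℓ : ℚ) * μ.re = A + B / 2 := by
    have := congrArg QuaternionAlgebra.re hz
    simpa [eps, div_eq_mul_inv] using this
  have e2 : (ℓ : ℚ) * μ.imI = B / 2 + C / 3 := by
    have := congrArg QuaternionAlgebra.imI hz
    simpa [eps, div_eq_mul_inv] using this
  have e3 : (ℓ : ℚ) * μ.imJ = D / 2 := by
    have := congrArg QuaternionAlgebra.imJ hz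
    simpa [eps, div_eq_mul_inv] using this
  have e4 : (ℓ : ℚ) * μ.imK = C / 3 + D / 2 := by
    have := congrArg QuaternionAlgebra.imK hz
    simpa [eps, div_eq_mul_inv] using this
  have hn : μ.re ^ 2 + 3 * μ.imI ^ 2 + p * μ.imJ ^ 2 + 3 * p * μ.imK ^ 2 = 1 := by
    rw [← hμn]
    simp [Nrd]
    ring
  have hN : 3 * (2 * A + B) ^ 2 + (3 * B + 2 * C) ^ 2
      + 4 * (p : ℤ) * (3 * D ^ 2 + 3 * C * D + C ^ 2) = 12 * (ℓ : ℤ) ^ 2 := by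
    have : (3 * (2 * A + B) ^ 2 + (3 * B + 2 * C) ^ 2
      + 4 * p * (3 * D ^ 2 + 3 * C * D + C ^ 2) : ℚ) = 12 * (ℓ : ℚ) ^ 2 := by
      have h1 : ((ℓ : ℚ) * μ.re) ^ 2 + 3 * (ℓ * μ.imI) ^ 2 + p * (ℓ * μ.imJ) ^ 2
          + 3 * p * (ℓ * μ.imK) ^ 2 = ℓ ^ 2 := by linear_combination (ℓ : ℚ) ^ 2 * hn
      rw [e1, e2, e3, e4] at h1
      linear_combination 12 * h1
    exact_mod_cast this
  obtain ⟨rfl, rfl, hAB⟩ := coords_of_norm (by exact_mod_cast hpl) hN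
  have hA : ¬ (ℓ : ℤ) ∣ A := by
    rintro ⟨a, rfl⟩
    have hB : (ℓ : ℤ) ∣ B ^ 2 := ⟨ℓ - ℓ * a ^ 2 - a * B, by linarith⟩
    obtain ⟨b, rfl⟩ := (Nat.prime_iff_prime_int.1 hℓ).dvd_of_dvd_pow hB
    have hlz : (ℓ : ℤ) ^ 2 ≠ 0 := pow_ne_zero 2 (by exact_mod_cast hℓ.ne_zero)
    have hab : a ^ 2 + a * b + b ^ 2 = 1 :=
      mul_left_cancel₀ hlz (by linear_combination hAB)
    have f1 : μ.re = a + b / 2 := mul_left_cancel₀ hl0 (by rw [e1]; push_cast; ring)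
    have f2 : μ.imI = b / 2 := mul_left_cancel₀ hl0 (by rw [e2]; push_cast; ring)
    have f3 : μ.imJ = 0 := mul_left_cancel₀ hl0 (by rw [e3]; push_cast; ring)
    have f4 : μ.imK = 0 := mul_left_cancel₀ hl0 (by rw [e4]; push_cast; ring)
    apply hμ
    simp only [Set.mem_insert_iff, Set.mem_singleton_iff, QuaternionAlgebra.ext_iff, f1, f2, f3, f4]
    rcases eisenstein_units hab with ⟨rfl, rfl⟩ | ⟨rfl, rfl⟩ | ⟨rfl, rfl⟩ | ⟨rfl, rfl⟩ |
      ⟨rfl, rfl⟩ | ⟨rfl, rfl⟩ <;> norm_num [eps, epsBar]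
  exact ⟨mod_three_eq_one hℓ hA hAB, A, B, hA, hAB, by simpa using hz⟩
end

section
/- Let p ≡ 3 (mod 4) and ℓ be distinct primes, and let I be a left O-ideal of reduced norm ℓ. Then: (a) ℓO ⊆ I·i, so that I·i = ℓO + I·i is again a left O-ideal of reduced norm ℓ; (b) for all integers a, a' with ℓ ∤ a and a·a' ≡ −1 (mod ℓ), one has (ℓO + I·(a+i))·i = ℓO + I·(a'+i). -/
/-!
For `α ∈ I` the integer `Nrd α = ᾱ * α` lies in `I`, because `ᾱ ∈ O`.  The integers in `I` form a
subgroup `gℤ` of `ℤ`; its generator `g` divides every `Nrd α`, hence divides the reduced norm `ℓ`,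
so `ℓ ∈ I` (`natCast_mem_of_hasReducedNorm`) and therefore `ℓO ⊆ I`.  Since `O` is stable under
right multiplication by the unit `i`, also `ℓO = (ℓO)·i ⊆ I·i`, and right multiplication by `i`
preserves reduced norms; this is part (a).

For part (b), write `a * a' + 1 = ℓ * m`.  The two inclusions are the identities
`(ℓx + y(a+i))i = ℓ(xi - my) + (ay)(a'+i)` and
`ℓx + y(a'+i) = (ℓ(-xi + my) + (-a'y)(a+i))i`.
-/

open Quaternion

/-- Membership in `O` in coordinates with respect to `1, i, j, k`. -/
theorem mem_O1728_iff {p : ℕ} {z : H1 p} :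
    z ∈ O1728 p ↔ ∃ A B C D : ℤ, z.re = A + C / 2 ∧ z.imI = B + D / 2 ∧
      z.imJ = C / 2 ∧ z.imK = D / 2 := by
  unfold O1728 qi
  simp only [Set.mem_ofPred_eq, QuaternionAlgebra.ext_iff]
  refine exists_congr fun A => exists_congr fun B => exists_congr fun C => exists_congr fun D => ?_
  simp [div_eq_mul_inv]

theorem add_mem_O1728 {p : ℕ} {x y : H1 p} (hx : x ∈ O1728 p) (hy : y ∈ O1728 p) :
    x + y ∈ O1728 p := by
  rw [mem_O1728_iff] at *
  obtain ⟨A, B, C, D, h1, h2, h3, h4⟩ := hx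
  obtain ⟨A', B', C', D', h1', h2', h3', h4'⟩ := hy
  refine ⟨A + A', B + B', C + C', D + D', ?_, ?_, ?_, ?_⟩ <;>
    simp [h1, h2, h3, h4, h1', h2', h3', h4'] <;> ring

theorem intCast_mul_mem_O1728 {p : ℕ} (n : ℤ) {x : H1 p} (hx : x ∈ O1728 p) :
    (n : H1 p) * x ∈ O1728 p := by
  rw [mem_O1728_iff] at *
  obtain ⟨A, B, C, D, h1, h2, h3, h4⟩ := hx
  refine ⟨n * A, n * B, n * C, n * D, ?_, ?_, ?_, ?_⟩ <;>
    simp [h1, h2, h3, h4] <;> ring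

theorem star_mem_O1728 {p : ℕ} {x : H1 p} (hx : x ∈ O1728 p) : star x ∈ O1728 p := by
  rw [mem_O1728_iff] at *
  obtain ⟨A, B, C, D, h1, h2, h3, h4⟩ := hx
  refine ⟨A + C, -B, -C, -D, ?_, ?_, ?_, ?_⟩ <;>
    simp [h1, h2, h3, h4] <;> ring

theorem mul_qi_mem_O1728 {p : ℕ} {x : H1 p} (hx : x ∈ O1728 p) : x * qi p ∈ O1728 p := by
  rw [mem_O1728_iff] at *
  obtain ⟨A, B, C, D, h1, h2, h3, h4⟩ := hx
  refine ⟨-B - D, A + C, D, -C, ?_, ?_, ?_, ?_⟩ <;>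
    simp [qi, h1, h2, h3, h4] <;> ring

theorem qi_mul_qi (p : ℕ) : qi p * qi p = -1 := by
  ext <;> simp [qi]

theorem Nrd_mul_qi {p : ℕ} (x : H1 p) : Nrd (x * qi p) = Nrd x := by
  simp [Nrd, qi]
  ring

theorem star_mul_eq_Nrd {p : ℕ} (x : H1 p) : star x * x = ((Nrd x : ℚ) : H1 p) := by
  ext <;> simp [Nrd] <;> ring

/-- The integers in `I` form a subgroup of `ℤ` containing all reduced norms `ᾱ * α`, hence their
gcd. -/
theorem natCast_mem_of_hasReducedNorm {p ℓ : ℕ} {I : AddSubgroup (H1 p)}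
    (hI : IsLeftIdealOf (O1728 p) I) (hIn : HasReducedNorm I (ℓ : ℤ)) : (ℓ : H1 p) ∈ I := by
  let S : AddSubgroup ℤ := I.comap (Int.castAddHom (H1 p))
  obtain ⟨g, hg⟩ := Int.subgroup_cyclic S
  have hmem (n : ℤ) : g ∣ n ↔ (n : H1 p) ∈ I := by
    rw [← Int.mem_zmultiples_iff, AddSubgroup.zmultiples_eq_closure, ← hg]
    simp [S]
  have hdvd : g ∣ (ℓ : ℤ) := by
    refine hIn.2 g fun α hα => ?_
    obtain ⟨z, hz⟩ := hIn.1 α hα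
    have h : star α * α ∈ I := hI.2 _ (star_mem_O1728 (hI.1 hα)) _ hα
    have hcast : ((Nrd α : ℚ) : H1 p) = (((ℓ : ℤ) * z : ℤ) : H1 p) := by
      rw [hz]
      ext <;> simp
    rw [star_mul_eq_Nrd, hcast, ← hmem] at h
    obtain ⟨w, hw⟩ := h
    exact ⟨w, by rw [hz]; exact_mod_cast hw⟩
  simpa using (hmem _).1 hdvd

/-- for distinct primes `p ≡ 3 (mod 4)` and `ℓ`, and `I` a left `O`-ideal
of reduced norm `ℓ`: (a) `ℓO ⊆ I·i`, and `I·i = ℓO + I·i` is again a left `O`-ideal of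
reduced norm `ℓ`; (b) for `a, a'` with `ℓ ∤ a` and `aa' ≡ −1 (mod ℓ)`,
`(ℓO + I(a+i))·i = ℓO + I(a'+i)`. -/
theorem stmt15 (p ℓ : ℕ) (hp : p.Prime) (hℓ : ℓ.Prime) (hne : p ≠ ℓ) (hp4 : p % 4 = 3)
    (I : AddSubgroup (H1 p)) (hI : IsLeftIdealOf (O1728 p) I)
    (hIn : HasReducedNorm I (ℓ : ℤ)) :
    -- (a)
    ((∀ x ∈ O1728 p, (ℓ : H1 p) * x ∈ (· * qi p) '' (I : Set (H1 p))) ∧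
     (∃ J : AddSubgroup (H1 p),
        (J : Set (H1 p)) = (· * qi p) '' (I : Set (H1 p)) ∧
        (J : Set (H1 p)) = shiftSet ℓ (O1728 p) (I : Set (H1 p)) (qi p) ∧
        IsLeftIdealOf (O1728 p) J ∧ HasReducedNorm J (ℓ : ℤ))) ∧
    -- (b)
    (∀ a a' : ℤ, ¬ ((ℓ : ℤ) ∣ a) → (ℓ : ℤ) ∣ (a * a' + 1) →
      (· * qi p) '' shiftSet ℓ (O1728 p) (I : Set (H1 p)) ((a : H1 p) + qi p) =
        shiftSet ℓ (O1728 p) (I : Set (H1 p)) ((a' : H1 p) + qi p)) := by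
  have hℓI : ∀ x ∈ O1728 p, (ℓ : H1 p) * x ∈ I := fun x hx => by
    rw [Nat.cast_comm]
    exact hI.2 x hx _ (natCast_mem_of_hasReducedNorm hI hIn)
  have hi2 (x : H1 p) : x * qi p * qi p = -x := by rw [mul_assoc, qi_mul_qi, mul_neg_one]
  have ha : ∀ x ∈ O1728 p, (ℓ : H1 p) * x ∈ (· * qi p) '' (I : Set (H1 p)) := fun x hx =>
    ⟨-((ℓ : H1 p) * (x * qi p)), I.neg_mem (hℓI _ (mul_qi_mem_O1728 hx)), by
      simp only [neg_mul, ← mul_assoc, hi2, neg_neg]⟩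
  have hzero : (0 : H1 p) ∈ O1728 p := hI.1 I.zero_mem
  have hzI (n : ℤ) {y : H1 p} (hy : y ∈ I) : (n : H1 p) * y ∈ I := by
    simpa using I.zsmul_mem hy n
  refine ⟨⟨ha, I.map (AddMonoidHom.mulRight (qi p)), rfl, ?_, ⟨?_, ?_⟩, ?_, ?_⟩, ?_⟩
  · ext z
    constructor
    · rintro ⟨y, hy, rfl⟩
      exact ⟨0, hzero, y, hy, by simp⟩
    · rintro ⟨x, hx, y, hy, rfl⟩
      obtain ⟨w, hw, hwx⟩ := ha x hx
      exact ⟨w + y, I.add_mem hw hy, by simp only at hwx; simp [add_mul, hwx]⟩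
  · rintro _ ⟨y, hy, rfl⟩
    exact mul_qi_mem_O1728 (hI.1 hy)
  · rintro x hx _ ⟨y, hy, rfl⟩
    exact ⟨x * y, hI.2 x hx y hy, by simp [mul_assoc]⟩
  · rintro _ ⟨y, hy, rfl⟩
    simpa only [AddMonoidHom.coe_mulRight, Nrd_mul_qi] using hIn.1 y hy
  · intro d hd
    refine hIn.2 d fun α hα => ?_
    simpa only [AddMonoidHom.coe_mulRight, Nrd_mul_qi] using hd _ ⟨α, hα, rfl⟩
  · rintro a a' - ⟨m, hm⟩
    have hmQ : (a : ℚ) * a' + 1 = ℓ * m := by exact_mod_cast hm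
    ext z
    constructor
    · rintro ⟨_, ⟨x, hx, y, hy, rfl⟩, rfl⟩
      refine ⟨x * qi p + ((-m : ℤ) : H1 p) * y,
        add_mem_O1728 (mul_qi_mem_O1728 hx) (intCast_mul_mem_O1728 _ (hI.1 hy)),
        (a : H1 p) * y, hzI a hy, ?_⟩
      ext <;> simp [qi]
      · linear_combination (-y.re) * hmQ
      · linear_combination (-y.imI) * hmQ
      · linear_combination (-y.imJ) * hmQ
      · linear_combination (-y.imK) * hmQ
    · rintro ⟨x, hx, y, hy, rfl⟩
      refine ⟨_, ⟨((-1 : ℤ) : H1 p) * (x * qi p) + (m : H1 p) * y,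
        add_mem_O1728 (intCast_mul_mem_O1728 _ (mul_qi_mem_O1728 hx))
          (intCast_mul_mem_O1728 _ (hI.1 hy)),
        ((-a' : ℤ) : H1 p) * y, hzI _ hy, rfl⟩, ?_⟩
      ext <;> simp [qi]
      · linear_combination y.imI * hmQ
      · linear_combination (-y.re) * hmQ
      · linear_combination (-y.imK) * hmQ
      · linear_combination y.imJ * hmQ
end
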